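/- arXiv:1607.03068 — 2 statements merged into one kernel-verified Lean document; each statement's English description precedes it below -/
import Mathlib

section
/- Let (M,d) be a nonempty complete metric space and let φ : M → ℝ satisfy 0 ≤ φ(x) ≤ 1 for all x ∈ M. Assume: (i) for every x ∈ M, φ(x) = ⨅_{y ∈ M} (φ(y) + d(x,y)); and (ii) for every x ∈ M and every ε > 0 there exists y ∈ M with φ(y) ≤ ε and |φ(x) − d(x,y)| ≤ ε. Then the zero set Z = {z ∈ M : φ(z) = 0} is nonempty, and for every x ∈ M, φ(x) = infDist(x, Z) (the infimum of d(x,z) over z ∈ Z). -/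
/-!
Condition (i) makes `φ` 1-Lipschitz, so `φ x ≤ dist x z` for every zero `z`, which gives
`φ x ≤ infDist x Z`. For the converse, condition (ii) is iterated with errors `ε / 2 ^ n`: from a
point where `φ ≤ ε` this yields a Cauchy sequence along which `φ` tends to `0`, whose limit is a
zero within `4 * ε` of the start (`exists_zero_near`). One further application of (ii) moves any
`x` to such a starting point at distance at most `φ x + ε`.
-/

theorem le_add_dist_of_eq_iInf {M : Type*} [MetricSpace M] (φ : M → ℝ) (h0 : ∀ x, 0 ≤ φ x)
    (hi : ∀ x, φ x = ⨅ y, (φ y + dist x y)) (x y : M) : φ x ≤ φ y + dist x y := by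
  rw [hi x]
  exact ciInf_le ⟨0, by rintro _ ⟨z, rfl⟩; exact add_nonneg (h0 z) dist_nonneg⟩ y

/-- A point where `φ` is at most `ε` lies within `4 * ε` of a zero of `φ`. -/
theorem exists_zero_near {M : Type*} [MetricSpace M] [CompleteSpace M]
    (φ : M → ℝ) (h0 : ∀ x, 0 ≤ φ x) (hlip : ∀ x y, φ x ≤ φ y + dist x y)
    (hii : ∀ x, ∀ ε > 0, ∃ y, φ y ≤ ε ∧ |φ x - dist x y| ≤ ε)
    {ε : ℝ} (hε : 0 < ε) (y : M) (hy : φ y ≤ ε) : ∃ z, φ z = 0 ∧ dist y z ≤ 4 * ε := by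
  have hstep : ∀ (n : ℕ) (x : M), ∃ w, φ w ≤ ε / 2 ^ (n + 1) ∧
      |φ x - dist x w| ≤ ε / 2 ^ (n + 1) := fun n x => hii x _ (by positivity)
  choose f hf1 hf2 using hstep
  let v : ℕ → M := fun n => Nat.rec y f n
  have hv : ∀ n, φ (v n) ≤ ε / 2 ^ n := by
    intro n
    cases n with
    | zero => simpa [v] using hy
    | succ n => exact hf1 n (v n)
  have hd : ∀ n, dist (v n) (v (n + 1)) ≤ 4 * ε / 2 / 2 ^ n := by
    intro n
    have h2 := (abs_le.mp (hf2 n (v n))).1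
    have h3 := hv n
    have h4 : ε / 2 ^ (n + 1) = ε / 2 ^ n / 2 := by rw [pow_succ, div_div]
    have h5 : 4 * ε / 2 / 2 ^ n = 2 * (ε / 2 ^ n) := by ring
    have h6 : 0 < ε / 2 ^ n := by positivity
    change dist (v n) (f n (v n)) ≤ _
    linarith
  obtain ⟨z, hz⟩ := cauchySeq_tendsto_of_complete (cauchySeq_of_le_geometric_two hd)
  refine ⟨z, le_antisymm ?_ (h0 z), dist_le_of_le_geometric_two_of_tendsto₀ hd hz⟩
  have hlim : Filter.Tendsto (fun n => ε / 2 ^ n + dist z (v n)) Filter.atTop (nhds (0 + 0)) := by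
    refine Filter.Tendsto.add ?_ ?_
    · exact tendsto_const_nhds.div_atTop (tendsto_pow_atTop_atTop_of_one_lt one_lt_two)
    · simpa using (tendsto_const_nhds (x := z)).dist hz
  rw [add_zero] at hlim
  exact ge_of_tendsto' hlim fun n => (hlip z (v n)).trans (by linarith [hv n])

theorem stmt_0 {M : Type*} [MetricSpace M] [Nonempty M] [CompleteSpace M]
    (φ : M → ℝ) (h0 : ∀ x, 0 ≤ φ x) (h1 : ∀ x, φ x ≤ 1)
    (hi : ∀ x, φ x = ⨅ y, (φ y + dist x y))
    (hii : ∀ x, ∀ ε > 0, ∃ y, φ y ≤ ε ∧ |φ x - dist x y| ≤ ε) :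
    ({z : M | φ z = 0}).Nonempty ∧
      ∀ x, φ x = Metric.infDist x {z : M | φ z = 0} := by
  have hlip := le_add_dist_of_eq_iInf φ h0 hi
  have hne : ({z : M | φ z = 0}).Nonempty := by
    obtain ⟨x⟩ := ‹Nonempty M›
    obtain ⟨z, hz, -⟩ := exists_zero_near φ h0 hlip hii one_pos x (h1 x)
    exact ⟨z, hz⟩
  refine ⟨hne, fun x => le_antisymm ?_ ?_⟩
  · refine (Metric.le_infDist hne).2 fun {z} hz => ?_
    have h := hlip x z
    rwa [Set.mem_ofPred_eq.mp hz, zero_add] at h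
  · refine le_of_forall_pos_le_add fun δ hδ => ?_
    -- The two moves cost `ε` and `4 * ε`, hence `ε = δ / 5`.
    obtain ⟨y, hy, hxy⟩ := hii x (δ / 5) (by positivity)
    obtain ⟨z, hz, hyz⟩ := exists_zero_near φ h0 hlip hii (by positivity) y hy
    have h2 := (abs_le.mp hxy).1
    have h3 : Metric.infDist x {z : M | φ z = 0} ≤ dist x z := Metric.infDist_le_dist_of_mem hz
    linarith [dist_triangle x y z]
end

section
/- There exists a continuous function Flim : (ℕ → [0,1]) → [0,1] (where ℕ → [0,1] carries the product topology) such that: (1) if a : ℕ → [0,1] is a sequence with the property that for every m and every n ≥ m, |a(n) − a(n+1)| ≤ 2^{−m}, then Flim(a) = lim_{n→∞} a(n); and (2) if a : ℕ → [0,1] converges to b ∈ [0,1] and |b − a(n)| ≤ 2^{−n} for every n, then Flim(a) = b. -/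
/-!
The forced limit of `a` is the telescoping series `a 0 + ∑ (a (n + 1) - a n)` in which the `n`-th
increment is clamped to `[-2 · 2⁻ⁿ, 2 · 2⁻ⁿ]`, followed by projection onto `[0,1]`. The clamped
series converges uniformly by the Weierstrass M-test, so it is continuous in `a`. If every increment
of `a` is already within its bound, nothing is clamped and the series telescopes to `lim a`
(`tendsto_forcedLim`). Both conditions of the theorem imply this: the first bounds the `n`-th
increment by `2⁻ⁿ`, the second by `2⁻ⁿ + 2⁻⁽ⁿ⁺¹⁾`.
-/

open Filter Topology

/-- The `n`-th increment of `a`, clamped to absolute value at most `2 · 2⁻ⁿ`. -/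
noncomputable def clampedStep (n : ℕ) (a : ℕ → Set.Icc (0:ℝ) 1) : ℝ :=
  max (-(2 * (1 / 2 : ℝ) ^ n)) (min (2 * (1 / 2 : ℝ) ^ n) ((a (n + 1) : ℝ) - a n))

/-- The forced limit: the sum of the clamped increments, projected onto `[0,1]`. -/
noncomputable def forcedLim (a : ℕ → Set.Icc (0:ℝ) 1) : Set.Icc (0:ℝ) 1 :=
  Set.projIcc 0 1 zero_le_one ((a 0 : ℝ) + ∑' n, clampedStep n a)

lemma summable_stepBound : Summable (fun n : ℕ => 2 * (1 / 2 : ℝ) ^ n) :=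
  summable_geometric_two.mul_left 2

lemma norm_clampedStep_le (n : ℕ) (a : ℕ → Set.Icc (0:ℝ) 1) :
    ‖clampedStep n a‖ ≤ 2 * (1 / 2 : ℝ) ^ n := by
  have h : (0:ℝ) ≤ 2 * (1 / 2 : ℝ) ^ n := by positivity
  rw [Real.norm_eq_abs, abs_le]
  exact ⟨le_max_left _ _, max_le (by linarith) (min_le_left _ _)⟩

lemma continuous_forcedLim : Continuous forcedLim := by
  refine continuous_projIcc.comp (Continuous.add (by fun_prop) ?_)
  refine continuous_tsum (fun n => ?_) summable_stepBound norm_clampedStep_le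
  unfold clampedStep
  fun_prop

lemma tendsto_forcedLim (a : ℕ → Set.Icc (0:ℝ) 1)
    (ha : ∀ n, |(a n : ℝ) - a (n + 1)| ≤ 2 * (1 / 2 : ℝ) ^ n) :
    Tendsto (fun n => (a n : ℝ)) atTop (𝓝 (forcedLim a : ℝ)) := by
  have hstep : ∀ n, clampedStep n a = (a (n + 1) : ℝ) - a n := fun n => by
    have h := abs_le.1 (ha n)
    rw [clampedStep, min_eq_right (by linarith), max_eq_right (by linarith)]
  have hsum : Summable (fun n => clampedStep n a) :=
    summable_stepBound.of_norm_bounded (fun n => norm_clampedStep_le n a)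
  have hlim : Tendsto (fun n => (a n : ℝ)) atTop (𝓝 ((a 0 : ℝ) + ∑' n, clampedStep n a)) := by
    refine (hsum.hasSum.tendsto_sum_nat.const_add (a 0 : ℝ)).congr (fun n => ?_)
    simp only [hstep, Finset.sum_range_sub (fun n => (a n : ℝ))]
    ring
  have hmem : (a 0 : ℝ) + ∑' n, clampedStep n a ∈ Set.Icc (0:ℝ) 1 :=
    isClosed_Icc.mem_of_tendsto hlim (Eventually.of_forall fun n => (a n).2)
  rwa [forcedLim, Set.projIcc_of_mem zero_le_one hmem]

theorem stmt_2 :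
    ∃ Flim : (ℕ → Set.Icc (0:ℝ) 1) → Set.Icc (0:ℝ) 1,
      Continuous Flim ∧
      (∀ a : ℕ → Set.Icc (0:ℝ) 1,
        (∀ m : ℕ, ∀ n ≥ m, |(a n : ℝ) - (a (n + 1) : ℝ)| ≤ (1 / 2 : ℝ) ^ m) →
        Filter.Tendsto (fun n => (a n : ℝ)) Filter.atTop (nhds ((Flim a : ℝ)))) ∧
      (∀ a : ℕ → Set.Icc (0:ℝ) 1, ∀ b : Set.Icc (0:ℝ) 1,
        Filter.Tendsto (fun n => (a n : ℝ)) Filter.atTop (nhds (b : ℝ)) →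
        (∀ n : ℕ, |(b : ℝ) - (a n : ℝ)| ≤ (1 / 2 : ℝ) ^ n) →
        Flim a = b) := by
  refine ⟨forcedLim, continuous_forcedLim, fun a ha => ?_, fun a b hb hab => ?_⟩
  · refine tendsto_forcedLim a (fun n => (ha n n le_rfl).trans ?_)
    have h : (0:ℝ) ≤ (1 / 2 : ℝ) ^ n := by positivity
    linarith
  · refine Subtype.ext (tendsto_nhds_unique (tendsto_forcedLim a (fun n => ?_)) hb)
    have h : (0:ℝ) ≤ (1 / 2 : ℝ) ^ n := by positivity
    have h0 := abs_le.1 (hab n)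
    have h1 := abs_le.1 (hab (n + 1))
    rw [pow_succ] at h1
    rw [abs_le]
    constructor <;> linarith
end
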